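/- Let H ∈ (0,1) and let n be an integer with n ≥ 2^{1/H}. Then f(H) − f(H,n) ≤ 6√(ln n)/n^H + 0.0107. -/

import Mathlib

open MeasureTheory ProbabilityTheory Real Set Filter Topology

noncomputable section

/-- `X` is a centered Gaussian process on the time set `S`: every finite linear
combination `∑ i, c i * X (ts i)` of its values at times in `S` is a centered
Gaussian random variable. -/
def IsCenteredGaussianOn {Ω : Type} [MeasurableSpace Ω] (μ : Measure Ω)
    (X : ℝ → Ω → ℝ) (S : Set ℝ) : Prop :=
  (∀ t ∈ S, Measurable (X t)) ∧
  ∀ (k : ℕ) (c : Fin k → ℝ) (ts : Fin k → ℝ), (∀ i, ts i ∈ S) →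
    ∃ v : NNReal, μ.map (fun ω => ∑ i, c i * X (ts i) ω) = gaussianReal 0 v

/-- The `L²`-norm `‖Y‖₂ = (E Y²)^{1/2}` of a real random variable. -/
def l2norm {Ω : Type} [MeasurableSpace Ω] (μ : Measure Ω) (Y : Ω → ℝ) : ℝ :=
  Real.sqrt (∫ ω, (Y ω) ^ 2 ∂μ)

/-- The expected supremum `E [sup_{0 ≤ t ≤ 1} X_t]`. -/
def expMax {Ω : Type} [MeasurableSpace Ω] (μ : Measure Ω) (X : ℝ → Ω → ℝ) : ℝ :=
  ∫ ω, (⨆ t : Icc (0:ℝ) 1, X t.1 ω) ∂μ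

/-- The expected maximum over the grid: `E [max_{0 ≤ i ≤ n} X_{i/n}]`. -/
def expMaxGrid {Ω : Type} [MeasurableSpace Ω] (μ : Measure Ω) (X : ℝ → Ω → ℝ) (n : ℕ) : ℝ :=
  ∫ ω, (⨆ i : Fin (n + 1), X (((i : ℕ) : ℝ) / (n : ℝ)) ω) ∂μ

/-- `B` is a fractional Brownian motion with Hurst parameter `H`: a centered Gaussian
process on `[0,∞)` with a.s. continuous sample paths, `B 0 = 0`, and covariance
`E[B_s B_t] = (s^{2H} + t^{2H} - |t-s|^{2H}) / 2`. -/
def IsFBM {Ω : Type} [MeasurableSpace Ω] (μ : Measure Ω) (H : ℝ) (B : ℝ → Ω → ℝ) : Prop :=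
  IsCenteredGaussianOn μ B (Ici 0) ∧
  (∀ᵐ ω ∂μ, ContinuousOn (fun t => B t ω) (Ici 0)) ∧
  (∀ᵐ ω ∂μ, B 0 ω = 0) ∧
  ∀ s t : ℝ, 0 ≤ s → 0 ≤ t →
    ∫ ω, B s ω * B t ω ∂μ = (s ^ (2 * H) + t ^ (2 * H) - |t - s| ^ (2 * H)) / 2

/-! Moving each of the `N + 1` points of a fine grid down to a coarse grid of mesh `1 / m` perturbs
`B` by Gaussian increments of variance at most `m ^ (-2 * H)`, whose expected maximum is at most
`√(2 * log (N + 1)) / m ^ H` by a union bound on moment generating functions. Chaining through the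
meshes `1 / n, 1 / n ^ 2, ...` costs at most `√(log n) / n ^ H` times
`∑ k, (k + 5) / 2 ^ (k + 1) = 6`, since `n ^ H ≥ 2`, and the grid maxima converge to the supremum by
continuity of the paths. -/

open scoped NNReal

section GeneralFacts

variable {Ω : Type*} [MeasurableSpace Ω] {μ : Measure Ω}

theorem hasSubgaussianMGF_mono {Y : Ω → ℝ} {c d : ℝ≥0} (hY : HasSubgaussianMGF Y c μ)
    (hcd : c ≤ d) : HasSubgaussianMGF Y d μ :=
  ⟨hY.integrable_exp_mul, fun l => (hY.mgf_le l).trans (by gcongr)⟩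

theorem hasSubgaussianMGF_of_hasLaw_gaussianReal {Y : Ω → ℝ} {v : ℝ≥0}
    (hY : HasLaw Y (gaussianReal 0 v) μ) : HasSubgaussianMGF Y v μ where
  integrable_exp_mul l := by
    have h := integrable_exp_mul_gaussianReal (μ := 0) (v := v) l
    rw [← hY.map_eq] at h
    exact h.comp_aemeasurable hY.aemeasurable
  mgf_le l := by rw [mgf_gaussianReal hY.map_eq l, zero_mul, zero_add]

theorem integrable_iSup_of_finite {ι : Type*} [Finite ι] {Y : ι → Ω → ℝ}
    (hY : ∀ i, Integrable (Y i) μ) : Integrable (fun ω => ⨆ i, Y i ω) μ := by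
  have := Fintype.ofFinite ι
  refine (integrable_finsetSum Finset.univ fun i _ => (hY i).abs).mono'
    (AEMeasurable.iSup fun i => (hY i).aemeasurable).aestronglyMeasurable (ae_of_all _ fun ω => ?_)
  cases isEmpty_or_nonempty ι
  · simp
  · obtain ⟨i, hi⟩ := exists_eq_ciSup_of_finite (f := fun i => Y i ω)
    rw [← hi, norm_eq_abs]
    exact Finset.single_le_sum (f := fun i => |Y i ω|) (fun _ _ => abs_nonneg _)
      (Finset.mem_univ i)

theorem exp_mul_integral_iSup_le_sum_mgf [IsProbabilityMeasure μ] {ι : Type*} [Fintype ι]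
    [Nonempty ι] {Y : ι → Ω → ℝ} {l : ℝ} (hY : ∀ i, Integrable (Y i) μ)
    (hexp : ∀ i, Integrable (fun ω => exp (l * Y i ω)) μ) :
    exp (l * ∫ ω, ⨆ i, Y i ω ∂μ) ≤ ∑ i, mgf (Y i) μ l := by
  have hM : Integrable (fun ω => ⨆ i, Y i ω) μ := integrable_iSup_of_finite hY
  have hle : ∀ ω, exp (l * ⨆ i, Y i ω) ≤ ∑ i, exp (l * Y i ω) := fun ω => by
    obtain ⟨i, hi⟩ := exists_eq_ciSup_of_finite (f := fun i => Y i ω)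
    rw [← hi]
    exact Finset.single_le_sum (f := fun i => exp (l * Y i ω)) (fun _ _ => (exp_pos _).le)
      (Finset.mem_univ i)
  have hsum : Integrable (fun ω => ∑ i, exp (l * Y i ω)) μ :=
    integrable_finsetSum _ fun i _ => hexp i
  have hexpM : Integrable (fun ω => exp (l * ⨆ i, Y i ω)) μ :=
    hsum.mono' (continuous_exp.comp_aestronglyMeasurable (hM.const_mul l).aestronglyMeasurable)
      (ae_of_all _ fun ω => by rw [norm_of_nonneg (exp_pos _).le]; exact hle ω)
  calc exp (l * ∫ ω, ⨆ i, Y i ω ∂μ)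
      = exp (∫ ω, l * ⨆ i, Y i ω ∂μ) := by rw [integral_const_mul]
    _ ≤ ∫ ω, exp (l * ⨆ i, Y i ω) ∂μ :=
        convexOn_exp.map_integral_le continuous_exp.continuousOn isClosed_univ
          (ae_of_all _ fun _ => mem_univ _) (hM.const_mul l) hexpM
    _ ≤ ∫ ω, ∑ i, exp (l * Y i ω) ∂μ := integral_mono hexpM hsum hle
    _ = ∑ i, mgf (Y i) μ l := integral_finsetSum _ fun i _ => hexp i

theorem integral_iSup_le_sqrt_two_mul_log_card [IsProbabilityMeasure μ] {ι : Type*} [Fintype ι]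
    [Nonempty ι] {Y : ι → Ω → ℝ} {c : ℝ≥0} (hY : ∀ i, HasSubgaussianMGF (Y i) c μ) :
    ∫ ω, ⨆ i, Y i ω ∂μ ≤ √(2 * c * log (Fintype.card ι)) := by
  set E := ∫ ω, ⨆ i, Y i ω ∂μ
  have hcard : (0 : ℝ) < Fintype.card ι := Nat.cast_pos.2 Fintype.card_pos
  have hmgf (l : ℝ) : l * E ≤ log (Fintype.card ι) + c * l ^ 2 / 2 := by
    rw [← exp_le_exp, exp_add, exp_log hcard]
    calc exp (l * E) ≤ ∑ i, mgf (Y i) μ l :=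
          exp_mul_integral_iSup_le_sum_mgf (fun i => (hY i).integrable)
            fun i => (hY i).integrable_exp_mul l
      _ ≤ ∑ _i : ι, exp (c * l ^ 2 / 2) := Finset.sum_le_sum fun i _ => (hY i).mgf_le l
      _ = Fintype.card ι * exp (c * l ^ 2 / 2) := by
          rw [Finset.sum_const, Finset.card_univ, nsmul_eq_mul]
  have hdiscrim : discrim (c / 2 : ℝ) (-E) (log (Fintype.card ι)) ≤ 0 :=
    discrim_le_zero fun l => by linarith [hmgf l]
  refine le_sqrt_of_sq_le ?_
  rw [discrim] at hdiscrim
  linarith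

theorem integrable_and_integral_le_of_tendsto_of_nonneg {f : ℕ → Ω → ℝ} {F : Ω → ℝ} {C : ℝ}
    (hf : ∀ k, Integrable (f k) μ) (hf_nonneg : ∀ k, 0 ≤ᵐ[μ] f k)
    (hlim : ∀ᵐ ω ∂μ, Tendsto (fun k => f k ω) atTop (𝓝 (F ω))) (hC : ∀ k, ∫ ω, f k ω ∂μ ≤ C) :
    Integrable F μ ∧ ∫ ω, F ω ∂μ ≤ C := by
  have hF_nonneg : 0 ≤ᵐ[μ] F := by
    filter_upwards [hlim, ae_all_iff.2 hf_nonneg] with ω hω hle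
    exact ge_of_tendsto' hω hle
  have hf_bound (k : ℕ) : ∫⁻ ω, ENNReal.ofReal (f k ω) ∂μ ≤ ENNReal.ofReal C := by
    rw [← ofReal_integral_eq_lintegral_ofReal (hf k) (hf_nonneg k)]
    exact ENNReal.ofReal_le_ofReal (hC k)
  have hfatou : ∫⁻ ω, ENNReal.ofReal (F ω) ∂μ ≤ ENNReal.ofReal C :=
    calc ∫⁻ ω, ENNReal.ofReal (F ω) ∂μ
        = ∫⁻ ω, liminf (fun k => ENNReal.ofReal (f k ω)) atTop ∂μ :=
          lintegral_congr_ae (hlim.mono fun ω hω => (ENNReal.tendsto_ofReal hω).liminf_eq.symm)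
      _ ≤ liminf (fun k => ∫⁻ ω, ENNReal.ofReal (f k ω) ∂μ) atTop :=
          lintegral_liminf_le' fun k => (hf k).aemeasurable.ennreal_ofReal
      _ ≤ ENNReal.ofReal C := liminf_le_of_frequently_le' (Frequently.of_forall hf_bound)
  have hF : Integrable F μ :=
    (lintegral_ofReal_ne_top_iff_integrable
      (aestronglyMeasurable_of_tendsto_ae _ (fun k => (hf k).aestronglyMeasurable) hlim)
      hF_nonneg).1 (hfatou.trans_lt ENNReal.ofReal_lt_top).ne
  have hC_nonneg : 0 ≤ C := (integral_nonneg_of_ae (hf_nonneg 0)).trans (hC 0)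
  rw [← ofReal_integral_eq_lintegral_ofReal hF hF_nonneg,
    ENNReal.ofReal_le_ofReal_iff hC_nonneg] at hfatou
  exact ⟨hF, hfatou⟩

theorem integrable_and_integral_le_of_tendsto {f : ℕ → Ω → ℝ} {F g : Ω → ℝ} {C : ℝ}
    (hf : ∀ k, Integrable (f k) μ) (hg : Integrable g μ) (hgf : ∀ k, g ≤ᵐ[μ] f k)
    (hlim : ∀ᵐ ω ∂μ, Tendsto (fun k => f k ω) atTop (𝓝 (F ω))) (hC : ∀ k, ∫ ω, f k ω ∂μ ≤ C) :
    Integrable F μ ∧ ∫ ω, F ω ∂μ ≤ C := by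
  obtain ⟨hFg, hle⟩ := integrable_and_integral_le_of_tendsto_of_nonneg (F := F - g)
    (C := C - ∫ ω, g ω ∂μ) (fun k => (hf k).sub hg) (fun k => (hgf k).mono fun _ => sub_nonneg.2)
    (hlim.mono fun _ hω => hω.sub_const _)
    fun k => (integral_sub' (hf k) hg).trans_le (sub_le_sub_right (hC k) _)
  have hF : Integrable F μ := by simpa only [sub_add_cancel] using hFg.add hg
  rw [integral_sub' hF hg, sub_le_sub_iff_right] at hle
  exact ⟨hF, hle⟩

end GeneralFacts

section Grid

/-- The maximum of the path `g` over the grid `{0, 1 / n, ..., n / n}` of mesh `1 / n`, so that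
`expMaxGrid μ X n` is the expectation of `gridMax (X · ω) n`. For `n = 0` the grid is `{0}`, since
`0 / 0 = 0`. -/
def gridMax (g : ℝ → ℝ) (n : ℕ) : ℝ :=
  ⨆ i : Fin (n + 1), g ((i : ℕ) / n)

theorem natCast_div_mem_Icc {i n : ℕ} (h : i ≤ n) : (i / n : ℝ) ∈ Icc (0 : ℝ) 1 :=
  unitInterval.div_mem i.cast_nonneg n.cast_nonneg (Nat.cast_le.2 h)

theorem floor_mul_le {t : ℝ} (ht : t ≤ 1) (n : ℕ) : ⌊t * n⌋₊ ≤ n :=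
  Nat.floor_le_of_le (mul_le_of_le_one_left n.cast_nonneg ht)

theorem abs_sub_floor_mul_div_le {t : ℝ} (ht : 0 ≤ t) {n : ℕ} (hn : 0 < n) :
    |t - ⌊t * n⌋₊ / n| ≤ (n : ℝ)⁻¹ := by
  have hn' : (0 : ℝ) < n := Nat.cast_pos.2 hn
  have hle : (⌊t * n⌋₊ / n : ℝ) ≤ t := (div_le_iff₀ hn').2 (Nat.floor_le (by positivity))
  rw [abs_of_nonneg (sub_nonneg.2 hle), sub_le_iff_le_add, ← one_div, ← add_div, le_div_iff₀ hn',
    add_comm]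
  exact (Nat.lt_floor_add_one _).le

theorem le_gridMax (g : ℝ → ℝ) {i n : ℕ} (h : i ≤ n) : g (i / n) ≤ gridMax g n :=
  le_ciSup (f := fun i : Fin (n + 1) => g ((i : ℕ) / n)) (finite_range _).bddAbove
    ⟨i, Nat.lt_succ_of_le h⟩

theorem apply_zero_le_gridMax (g : ℝ → ℝ) (n : ℕ) : g 0 ≤ gridMax g n := by
  simpa only [Nat.cast_zero, zero_div] using le_gridMax g n.zero_le

theorem gridMax_le_gridMax_add_iSup (g : ℝ → ℝ) (m N : ℕ) :
    gridMax g N ≤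
      gridMax g m + ⨆ i : Fin (N + 1), (g ((i : ℕ) / N) - g (⌊((i : ℕ) / N : ℝ) * m⌋₊ / m)) := by
  refine ciSup_le fun i => ?_
  have hcoarse := le_gridMax g (floor_mul_le (natCast_div_mem_Icc i.is_le).2 m)
  have hincr := le_ciSup (f := fun i : Fin (N + 1) =>
    g ((i : ℕ) / N) - g (⌊((i : ℕ) / N : ℝ) * m⌋₊ / m)) (finite_range _).bddAbove i
  linarith

theorem tendsto_gridMax {g : ℝ → ℝ} (hg : ContinuousOn g (Icc 0 1)) :
    Tendsto (gridMax g) atTop (𝓝 (⨆ t : Icc (0 : ℝ) 1, g t)) := by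
  obtain ⟨t, ht, hmax⟩ := isCompact_Icc.exists_isMaxOn (nonempty_Icc.2 zero_le_one) hg
  have hsup : (⨆ s : Icc (0 : ℝ) 1, g s) = g t :=
    IsLUB.ciSup_eq (IsGreatest.isLUB
      ⟨mem_range_self (f := fun s : Icc (0 : ℝ) 1 => g s) ⟨t, ht⟩,
        forall_mem_range.2 fun s => hmax s.2⟩)
  have hfloor : Tendsto (fun n : ℕ => g (⌊t * n⌋₊ / n)) atTop (𝓝 (g t)) :=
    (hg t ht).tendsto.comp (tendsto_nhdsWithin_iff.2
      ⟨(tendsto_nat_floor_mul_div_atTop ht.1).comp tendsto_natCast_atTop_atTop,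
        Eventually.of_forall fun n => natCast_div_mem_Icc (floor_mul_le ht.2 n)⟩)
  rw [hsup]
  exact tendsto_of_tendsto_of_tendsto_of_le_of_le hfloor tendsto_const_nhds
    (fun n => le_gridMax g (floor_mul_le ht.2 n))
    (fun n => ciSup_le fun i => hmax (natCast_div_mem_Icc i.is_le))

end Grid

section Chaining

variable {Ω : Type} [MeasurableSpace Ω] {μ : Measure Ω} {H : ℝ} {X : ℝ → Ω → ℝ}

/-- The increments of `X` over `[0, 1]` are sub-Gaussian, with the variances `|t - s| ^ (2 * H)` of
the increments of fractional Brownian motion as variance proxies. This is all that chaining uses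
about the law of the process. -/
def HasSubgaussianIncrements (μ : Measure Ω) (H : ℝ) (X : ℝ → Ω → ℝ) : Prop :=
  ∀ s ∈ Icc (0 : ℝ) 1, ∀ t ∈ Icc (0 : ℝ) 1,
    HasSubgaussianMGF (fun ω => X t ω - X s ω) (‖t - s‖₊ ^ (2 * H)) μ

theorem HasSubgaussianIncrements.integrable (hX : HasSubgaussianIncrements μ H X)
    (hX0 : Integrable (X 0) μ) {t : ℝ} (ht : t ∈ Icc (0 : ℝ) 1) : Integrable (X t) μ := by
  have hincr : Integrable (X t - X 0) μ := (hX 0 unitInterval.zero_mem t ht).integrable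
  simpa only [sub_add_cancel] using hincr.add hX0

theorem HasSubgaussianIncrements.integrable_gridMax (hX : HasSubgaussianIncrements μ H X)
    (hX0 : Integrable (X 0) μ) (n : ℕ) : Integrable (fun ω => gridMax (X · ω) n) μ :=
  integrable_iSup_of_finite fun i => hX.integrable hX0 (natCast_div_mem_Icc i.is_le)

theorem HasSubgaussianIncrements.expMaxGrid_le_add [IsProbabilityMeasure μ]
    (hX : HasSubgaussianIncrements μ H X) (hX0 : Integrable (X 0) μ) (hH : 0 ≤ H) {m : ℕ}
    (hm : 0 < m) (N : ℕ) :
    expMaxGrid μ X N ≤ expMaxGrid μ X m + √(2 * log (N + 1)) / m ^ H := by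
  let D (i : Fin (N + 1)) (ω : Ω) : ℝ := X ((i : ℕ) / N) ω - X (⌊((i : ℕ) / N : ℝ) * m⌋₊ / m) ω
  let c : ℝ≥0 := (m : ℝ≥0)⁻¹ ^ (2 * H)
  have hD (i : Fin (N + 1)) : HasSubgaussianMGF (D i) c μ := by
    have ht : ((i : ℕ) / N : ℝ) ∈ Icc (0 : ℝ) 1 := natCast_div_mem_Icc i.is_le
    refine hasSubgaussianMGF_mono
      (hX _ (natCast_div_mem_Icc (floor_mul_le ht.2 m)) _ ht)
      (NNReal.rpow_le_rpow ?_ (by positivity))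
    exact NNReal.coe_le_coe.1 (by simpa using abs_sub_floor_mul_div_le ht.1 hm)
  have hc : (c : ℝ) = ((m : ℝ) ^ H)⁻¹ ^ 2 := by
    simp only [c, NNReal.coe_rpow, NNReal.coe_inv, NNReal.coe_natCast]
    rw [inv_rpow m.cast_nonneg, mul_comm, rpow_mul m.cast_nonneg, rpow_two, inv_pow]
  have hmax : ∫ ω, ⨆ i, D i ω ∂μ ≤ √(2 * log (N + 1)) / m ^ H := by
    refine (integral_iSup_le_sqrt_two_mul_log_card hD).trans_eq ?_
    rw [hc, Fintype.card_fin, Nat.cast_add_one, mul_right_comm, sqrt_mul' _ (sq_nonneg _),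
      sqrt_sq (by positivity), div_eq_mul_inv]
  have hM := hX.integrable_gridMax hX0
  have hDint := integrable_iSup_of_finite fun i => (hD i).integrable
  calc expMaxGrid μ X N
      ≤ ∫ ω, gridMax (X · ω) m + ⨆ i, D i ω ∂μ :=
        integral_mono (hM N) ((hM m).add hDint) fun ω => gridMax_le_gridMax_add_iSup (X · ω) m N
    _ = expMaxGrid μ X m + ∫ ω, ⨆ i, D i ω ∂μ := integral_add (hM m) hDint
    _ ≤ expMaxGrid μ X m + √(2 * log (N + 1)) / m ^ H := by gcongr

theorem two_le_of_two_le_rpow {n : ℕ} (hH : 0 ≤ H) (hn : 2 ≤ (n : ℝ) ^ H) : 2 ≤ n := by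
  by_contra! h
  have := rpow_le_one n.cast_nonneg (Nat.cast_le_one.2 (Nat.le_of_lt_succ h)) hH
  linarith

theorem sqrt_two_mul_log_pow_add_one_le {n : ℕ} (hn : 2 ≤ n) (k : ℕ) :
    √(2 * log ((n : ℝ) ^ (k + 2) + 1)) ≤ √(log n) * ((k + 5) / 2) := by
  have hn' : (2 : ℝ) ≤ n := Nat.ofNat_le_cast.2 hn
  have hlog_nonneg : 0 ≤ log (n : ℝ) := log_natCast_nonneg n
  have hlog : log ((n : ℝ) ^ (k + 2) + 1) ≤ (k + 3) * log n := by
    have hpow : (n : ℝ) ^ (k + 2) + 1 ≤ n ^ (k + 3) := by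
      have h1 : (1 : ℝ) ≤ n ^ (k + 2) := one_le_pow₀ (by linarith)
      nlinarith [pow_succ (n : ℝ) (k + 2)]
    calc log ((n : ℝ) ^ (k + 2) + 1) ≤ log ((n : ℝ) ^ (k + 3)) := log_le_log (by positivity) hpow
      _ = (k + 3) * log n := by rw [log_pow]; push_cast; ring
  refine sqrt_le_iff.2 ⟨by positivity, ?_⟩
  calc 2 * log ((n : ℝ) ^ (k + 2) + 1) ≤ log n * (2 * (k + 3)) := by linarith
    _ ≤ log n * ((k + 5) / 2) ^ 2 := by gcongr; nlinarith [sq_nonneg ((k : ℝ) + 1)]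
    _ = (√(log n) * ((k + 5) / 2)) ^ 2 := by rw [mul_pow, sq_sqrt hlog_nonneg]

theorem HasSubgaussianIncrements.expMaxGrid_pow_le [IsProbabilityMeasure μ]
    (hX : HasSubgaussianIncrements μ H X) (hX0 : Integrable (X 0) μ) (hH : 0 ≤ H) {n : ℕ}
    (hn : 2 ≤ (n : ℝ) ^ H) (k : ℕ) :
    expMaxGrid μ X (n ^ (k + 1)) ≤
      expMaxGrid μ X n + √(log n) / n ^ H * (6 - (k + 6) / 2 ^ k) := by
  have hn2 : 2 ≤ n := two_le_of_two_le_rpow hH hn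
  induction k with
  | zero => simp
  | succ k ih =>
    have hmesh : ((n ^ (k + 1) : ℕ) : ℝ) ^ H = n ^ H * (n ^ H) ^ k := by
      rw [Nat.cast_pow, ← rpow_pow_comm n.cast_nonneg, pow_succ']
    have hstep : √(2 * log ((n ^ (k + 2) : ℕ) + 1)) / ((n ^ (k + 1) : ℕ) : ℝ) ^ H ≤
        √(log n) / n ^ H * ((k + 5) / 2 / 2 ^ k) := by
      rw [hmesh, Nat.cast_pow]
      calc √(2 * log ((n : ℝ) ^ (k + 2) + 1)) / (n ^ H * (n ^ H) ^ k)
          ≤ √(log n) * ((k + 5) / 2) / (n ^ H * 2 ^ k) := by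
            gcongr
            exact sqrt_two_mul_log_pow_add_one_le hn2 k
        _ = √(log n) / n ^ H * ((k + 5) / 2 / 2 ^ k) := by rw [mul_div_mul_comm]
    calc expMaxGrid μ X (n ^ (k + 2))
        ≤ expMaxGrid μ X (n ^ (k + 1)) +
            √(2 * log ((n ^ (k + 2) : ℕ) + 1)) / ((n ^ (k + 1) : ℕ) : ℝ) ^ H :=
          hX.expMaxGrid_le_add hX0 hH (by positivity) _
      _ ≤ expMaxGrid μ X n + √(log n) / n ^ H * (6 - (k + 6) / 2 ^ k) +
            √(log n) / n ^ H * ((k + 5) / 2 / 2 ^ k) := add_le_add ih hstep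
      _ = expMaxGrid μ X n +
            √(log n) / n ^ H * (6 - ((k + 1 : ℕ) + 6) / 2 ^ (k + 1)) := by
          push_cast
          field_simp
          ring

theorem integrable_and_expMax_le_of_tendsto
    (hcont : ∀ᵐ ω ∂μ, ContinuousOn (X · ω) (Icc 0 1)) (hX0 : Integrable (X 0) μ)
    (hM : ∀ n, Integrable (fun ω => gridMax (X · ω) n) μ) {u : ℕ → ℕ}
    (hu : Tendsto u atTop atTop) {C : ℝ} (hC : ∀ k, expMaxGrid μ X (u k) ≤ C) :
    Integrable (fun ω => ⨆ t : Icc (0 : ℝ) 1, X t ω) μ ∧ expMax μ X ≤ C :=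
  integrable_and_integral_le_of_tendsto (fun k => hM (u k)) hX0
    (fun k => ae_of_all _ fun ω => apply_zero_le_gridMax (X · ω) (u k))
    (hcont.mono fun _ hω => (tendsto_gridMax hω).comp hu) hC

theorem stmt16_general [IsProbabilityMeasure μ] (hH : 0 < H)
    (hcont : ∀ᵐ ω ∂μ, ContinuousOn (X · ω) (Icc 0 1)) (hX0 : Integrable (X 0) μ)
    (hX : HasSubgaussianIncrements μ H X) {n : ℕ} (hn : 2 ^ (1 / H) ≤ (n : ℝ)) :
    Integrable (fun ω => ⨆ t : Icc (0 : ℝ) 1, X t ω) μ ∧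
      expMax μ X - expMaxGrid μ X n ≤ 6 * √(log n) / n ^ H := by
  have hnH : 2 ≤ (n : ℝ) ^ H :=
    (rpow_inv_le_iff_of_pos zero_le_two n.cast_nonneg hH).1 (one_div H ▸ hn)
  have hchain (k : ℕ) : expMaxGrid μ X (n ^ (k + 1)) ≤
      expMaxGrid μ X n + √(log n) / n ^ H * 6 := by
    refine (hX.expMaxGrid_pow_le hX0 hH.le hnH k).trans ?_
    gcongr
    exact sub_le_self _ (by positivity)
  have hmesh : Tendsto (fun k => n ^ (k + 1)) atTop atTop :=
    (tendsto_pow_atTop_atTop_of_one_lt (two_le_of_two_le_rpow hH.le hnH)).comp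
      (tendsto_add_atTop_nat 1)
  obtain ⟨hint, hle⟩ := integrable_and_expMax_le_of_tendsto hcont hX0 (hX.integrable_gridMax hX0)
    hmesh hchain
  refine ⟨hint, ?_⟩
  rw [mul_comm, mul_div_right_comm]
  linarith

end Chaining

section FractionalBrownianMotion

variable {Ω : Type} [MeasurableSpace Ω] {μ : Measure Ω} {H : ℝ} {X B : ℝ → Ω → ℝ} {S : Set ℝ}
  {s t : ℝ}

theorem IsCenteredGaussianOn.memLp_two (hX : IsCenteredGaussianOn μ X S) (ht : t ∈ S) :
    MemLp (X t) 2 μ := by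
  obtain ⟨v, hv⟩ := hX.2 1 ![1] ![t] (by simpa using ht)
  have hlaw : HasLaw (X t) (gaussianReal 0 v) μ :=
    ⟨(hX.1 t ht).aemeasurable, by simpa using hv⟩
  exact hlaw.hasGaussianLaw.memLp_two

theorem IsCenteredGaussianOn.exists_hasLaw_sub (hX : IsCenteredGaussianOn μ X S) (hs : s ∈ S)
    (ht : t ∈ S) : ∃ v, HasLaw (fun ω => X t ω - X s ω) (gaussianReal 0 v) μ := by
  obtain ⟨v, hv⟩ := hX.2 2 ![1, -1] ![t, s] (by simpa [Fin.forall_fin_two] using ⟨ht, hs⟩)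
  exact ⟨v, ((hX.1 t ht).sub (hX.1 s hs)).aemeasurable,
    by simpa [Fin.sum_univ_two, ← sub_eq_add_neg] using hv⟩

theorem IsFBM.ae_continuousOn_Icc (hB : IsFBM μ H B) :
    ∀ᵐ ω ∂μ, ContinuousOn (B · ω) (Icc 0 1) :=
  hB.2.1.mono fun _ hω => hω.mono Icc_subset_Ici_self

theorem IsFBM.integrable_apply_zero (hB : IsFBM μ H B) : Integrable (B 0) μ :=
  (integrable_zero Ω ℝ μ).congr (hB.2.2.1.mono fun _ h => h.symm)

theorem IsFBM.integral_sub_sq (hB : IsFBM μ H B) (hH : 0 < H) (hs : 0 ≤ s) (ht : 0 ≤ t) :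
    ∫ ω, (B t ω - B s ω) ^ 2 ∂μ = |t - s| ^ (2 * H) := by
  have hint {a b : ℝ} (ha : 0 ≤ a) (hb : 0 ≤ b) : Integrable (fun ω => B a ω * B b ω) μ :=
    (hB.1.memLp_two ha).integrable_mul (hB.1.memLp_two hb)
  have hsub : Integrable (fun ω => B t ω * B t ω - 2 * (B s ω * B t ω)) μ :=
    (hint ht ht).sub ((hint hs ht).const_mul 2)
  obtain ⟨-, -, -, hcov⟩ := hB
  calc ∫ ω, (B t ω - B s ω) ^ 2 ∂μ
      = ∫ ω, B t ω * B t ω - 2 * (B s ω * B t ω) + B s ω * B s ω ∂μ := by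
        congr with ω
        ring
    _ = ∫ ω, B t ω * B t ω ∂μ - 2 * ∫ ω, B s ω * B t ω ∂μ + ∫ ω, B s ω * B s ω ∂μ := by
        rw [integral_add hsub (hint hs hs),
          integral_sub (hint ht ht) ((hint hs ht).const_mul 2), integral_const_mul]
    _ = |t - s| ^ (2 * H) := by
        rw [hcov t t ht ht, hcov s t hs ht, hcov s s hs hs, sub_self, sub_self, abs_zero,
          zero_rpow (by positivity)]
        ring

theorem IsFBM.hasSubgaussianIncrements (hB : IsFBM μ H B) (hH : 0 < H) :
    HasSubgaussianIncrements μ H B := by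
  intro s hs t ht
  obtain ⟨v, hlaw⟩ := hB.1.exists_hasLaw_sub (mem_Ici.2 hs.1) (mem_Ici.2 ht.1)
  have hmean : ∫ ω, (B t ω - B s ω) ∂μ = 0 := hlaw.integral_eq.trans integral_id_gaussianReal
  have hv : v = ‖t - s‖₊ ^ (2 * H) := by
    rw [← NNReal.coe_inj, NNReal.coe_rpow, coe_nnnorm, norm_eq_abs,
      ← hB.integral_sub_sq hH hs.1 ht.1, ← variance_of_integral_eq_zero hlaw.aemeasurable hmean,
      hlaw.variance_eq, variance_id_gaussianReal]
  exact hv ▸ hasSubgaussianMGF_of_hasLaw_gaussianReal hlaw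

end FractionalBrownianMotion

/-- for `n ≥ 2^{1/H}`, `f(H) - f(H,n) ≤ 6 √(ln n) / n^H + 0.0107`. -/
theorem stmt16 {Ω : Type} [MeasurableSpace Ω] (μ : Measure Ω) [IsProbabilityMeasure μ]
    (H : ℝ) (hH : H ∈ Ioo (0:ℝ) 1) (B : ℝ → Ω → ℝ) (hB : IsFBM μ H B)
    (n : ℕ) (hn : (2:ℝ) ^ (1 / H) ≤ (n : ℝ)) :
    expMax μ B - expMaxGrid μ B n ≤
      6 * Real.sqrt (Real.log n) / (n : ℝ) ^ H + 0.0107 := by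
  linarith [(stmt16_general hH.1 hB.ae_continuousOn_Icc hB.integrable_apply_zero
    (hB.hasSubgaussianIncrements hH.1) hn).2]
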